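/- Let λ be a Dyck path of order n, σ ∈ L(P_λ), and T = DTR(λ,σ); let ℓ_i, r_i be the endpoint positions of the chord labeled i in the natural labeling corresponding to σ, and let τ be the standardization of the word r = r_1⋯r_n (σ is the standardization of ℓ = ℓ_1⋯ℓ_n). Then area(T) = desdif(σ,τ) − des(σ) − Σ_{i∈DES(σ)} |REM_i(σ) Δ REM_i(τ)| and tiles(T) = desdif(σ,τ) − des(σ) − Σ_{i∈DES(σ)} (|REM_i(σ)| + |REM_i(τ)|). -/

import Mathlib

open Finset

noncomputable section

/-- A Dyck path of order `n`: a word of `2n` steps (`true` = up-step `(+1,+1)`,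
`false` = down-step `(+1,-1)`) from `(-n,0)` to `(n,0)` staying weakly above the x-axis. -/
structure DyckPath (n : ℕ) where
  step : Fin (2 * n) → Bool
  balanced : (Finset.univ.filter fun i => step i = true).card = n
  nonneg : ∀ k : ℕ, k ≤ 2 * n →
    (Finset.univ.filter fun i : Fin (2 * n) => (i : ℕ) < k ∧ step i = false).card ≤
      (Finset.univ.filter fun i : Fin (2 * n) => (i : ℕ) < k ∧ step i = true).card

namespace DyckPath

/-- Height of the path above column `x` (columns run from `-n` to `n`). -/
def ht {n : ℕ} (P : DyckPath n) (x : ℤ) : ℤ :=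
  ((Finset.univ.filter fun i : Fin (2 * n) => ((i : ℕ) : ℤ) < x + n ∧ P.step i = true).card : ℤ) -
    ((Finset.univ.filter fun i : Fin (2 * n) => ((i : ℕ) : ℤ) < x + n ∧ P.step i = false).card : ℤ)

/-- Height of the path at lattice point number `k`, `0 ≤ k ≤ 2n`
(point `k` lies at column `k - n`). -/
def pt {n : ℕ} (P : DyckPath n) (k : ℕ) : ℤ := P.ht ((k : ℤ) - n)

end DyckPath

/-- `IsChord P p q`: the up-step at (0-indexed) position `p` matches the down-step at
position `q`, forming a chord of `P`. -/
def IsChord {n : ℕ} (P : DyckPath n) (p q : ℕ) : Prop :=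
  p < q ∧ q < 2 * n ∧
    (∃ hp : p < 2 * n, P.step ⟨p, hp⟩ = true) ∧
    (∃ hq : q < 2 * n, P.step ⟨q, hq⟩ = false) ∧
    P.pt (q + 1) = P.pt p ∧
    ∀ m : ℕ, p < m → m ≤ q → P.pt p < P.pt m

/-- A natural labeling of the chord poset of `P`: the chord labeled `i` has its up-step at
(0-indexed) position `l i` and matching down-step at position `r i`; distinct labels name
distinct chords; and if one chord is nested inside another it receives a larger label. -/
structure ChordLabeling {n : ℕ} (P : DyckPath n) where
  l : Fin n → ℕ
  r : Fin n → ℕ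
  chord : ∀ i, IsChord P (l i) (r i)
  inj : Function.Injective l
  natural : ∀ i j : Fin n, l j < l i → r i < r j → j < i

/-- The length of the chord labeled `i`: the number of up steps of `P` between and
including its two endpoints. -/
def chordLen {n : ℕ} {P : DyckPath n} (C : ChordLabeling P) (i : Fin n) : ℕ :=
  (Finset.univ.filter fun m : Fin (2 * n) =>
    C.l i ≤ (m : ℕ) ∧ (m : ℕ) ≤ C.r i ∧ P.step m = true).card

/-- The growth sequence `p_1, …, p_n` associated with a natural chord labeling:
`p i = #{j<i : l j < l i} + #{j<i : r j < l i}`. -/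
def seqOf {n : ℕ} {P : DyckPath n} (C : ChordLabeling P) (i : Fin n) : ℕ :=
  (Finset.univ.filter fun j : Fin n => j < i ∧ C.l j < C.l i).card +
    (Finset.univ.filter fun j : Fin n => j < i ∧ C.r j < C.l i).card

/-- `σ` is the standardization of the word `w` (with distinct letters). -/
def IsStandardization {n : ℕ} (w : Fin n → ℕ) (σ : Equiv.Perm (Fin n)) : Prop :=
  ∀ i j : Fin n, σ i < σ j ↔ w i < w j

/-- `σ ∈ 𝓛(P_λ)`: σ is `L₀ ∘ L⁻¹` for some natural labeling `L` of the chord poset,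
equivalently the standardization of the word of left endpoints of a natural labeling. -/
def LinExt {n : ℕ} (P : DyckPath n) (σ : Equiv.Perm (Fin n)) : Prop :=
  ∃ C : ChordLabeling P, IsStandardization C.l σ

/-- Successor index in `Fin n` (used only under the guard `i+1 < n`). -/
def nextIdx {n : ℕ} (i : Fin n) : Fin n := ⟨((i : ℕ) + 1) % n, Nat.mod_lt _ i.pos⟩

/-- Descent set of a word: positions `i` with `i+1 < n` and `w i > w (i+1)`. -/
def descentFinset {n : ℕ} (w : Fin n → ℕ) : Finset (Fin n) :=
  Finset.univ.filter fun i => (i : ℕ) + 1 < n ∧ w (nextIdx i) < w i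

/-- Number of inversions of a word. -/
def wordInv {n : ℕ} (w : Fin n → ℕ) : ℕ :=
  (Finset.univ.filter fun p : Fin n × Fin n => p.1 < p.2 ∧ w p.2 < w p.1).card

/-- The word of values of a permutation. -/
def permWord {n : ℕ} (σ : Equiv.Perm (Fin n)) : Fin n → ℕ := fun i => (σ i : ℕ)

/-- inv(σ). -/
def permInv {n : ℕ} (σ : Equiv.Perm (Fin n)) : ℕ := wordInv (permWord σ)

/-- des(σ). -/
def permDes {n : ℕ} (σ : Equiv.Perm (Fin n)) : ℕ := (descentFinset (permWord σ)).card

/-- `REM_i(w) = {k > i : w i > w k > w (i+1)}`, the right embraced numbers. -/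
def remSet {n : ℕ} (w : Fin n → ℕ) (i : Fin n) : Finset (Fin n) :=
  Finset.univ.filter fun k => i < k ∧ w (nextIdx i) < w k ∧ w k < w i

/-- desdif(σ) = Σ_{i ∈ DES σ} (σ i − σ (i+1)). -/
def desdif {n : ℕ} (σ : Equiv.Perm (Fin n)) : ℕ :=
  ∑ i ∈ descentFinset (permWord σ), (permWord σ i - permWord σ (nextIdx i))

/-- res(σ) = Σ_{i ∈ DES σ} #{k < i : σ i > σ k > σ (i+1)}. -/
def resStat {n : ℕ} (σ : Equiv.Perm (Fin n)) : ℕ :=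
  ∑ i ∈ descentFinset (permWord σ),
    (Finset.univ.filter fun k : Fin n =>
      k < i ∧ permWord σ (nextIdx i) < permWord σ k ∧ permWord σ k < permWord σ i).card

/-- The Mahonian statistic mad(σ) = desdif(σ) + res(σ). -/
def mad {n : ℕ} (σ : Equiv.Perm (Fin n)) : ℕ := desdif σ + resStat σ

/-- σ avoids the pattern 231. -/
def Avoids231 {n : ℕ} (σ : Equiv.Perm (Fin n)) : Prop :=
  ¬∃ i j k : Fin n, i < j ∧ j < k ∧ σ k < σ i ∧ σ i < σ j

/-- The boxes of the skew shape `lam/mu` (with `mu` weakly above `lam`), each box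
recorded by its bottom corner (a lattice point `(x, z)` with `z ≡ x + n (mod 2)`). -/
def skewCells {n : ℕ} (lam mu : DyckPath n) : Finset (ℤ × ℤ) :=
  ((Finset.Icc (-(n : ℤ)) n) ×ˢ (Finset.Icc (0 : ℤ) n)).filter fun c =>
    lam.ht c.1 ≤ c.2 ∧ c.2 + 2 ≤ mu.ht c.1 ∧ (c.2 - c.1 - n) % 2 = 0

/-- A Dyck tile, recorded by the set of bottom corners of its boxes: these form
a Dyck-path shape, i.e. a ±1-step lattice path whose two ends are lowest. -/
def IsDyckTile (t : Finset (ℤ × ℤ)) : Prop :=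
  ∃ (a b : ℤ) (f : ℤ → ℤ), a ≤ b ∧
    (∀ x : ℤ, a ≤ x → x < b → f (x + 1) = f x + 1 ∨ f (x + 1) = f x - 1) ∧
    f b = f a ∧ (∀ x : ℤ, a ≤ x → x ≤ b → f a ≤ f x) ∧
    t = (Finset.Icc a b).image fun x => (x, f x)

/-- A Dyck tiling of order `n`: a tiling of the skew shape between two Dyck paths of
order `n` by Dyck tiles. -/
structure DyckTiling (n : ℕ) where
  lower : DyckPath n
  upper : DyckPath n
  below : ∀ x : ℤ, lower.ht x ≤ upper.ht x
  tiles : Finset (Finset (ℤ × ℤ))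
  isDyck : ∀ t ∈ tiles, IsDyckTile t
  disj : ∀ t ∈ tiles, ∀ u ∈ tiles, t ≠ u → Disjoint t u
  cover : tiles.biUnion id = skewCells lower upper

namespace DyckTiling

/-- Number of boxes of the skew shape. -/
def area {n : ℕ} (T : DyckTiling n) : ℕ := (skewCells T.lower T.upper).card

/-- Number of tiles. -/
def numTiles {n : ℕ} (T : DyckTiling n) : ℕ := T.tiles.card

/-- art(T) = (area(T) + tiles(T)) / 2. -/
def art {n : ℕ} (T : DyckTiling n) : ℕ := (T.area + T.numTiles) / 2

/-- dis(T): the number of step positions where the lower path steps down while the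
upper path steps up. -/
def dis {n : ℕ} (T : DyckTiling n) : ℕ :=
  (Finset.univ.filter fun i : Fin (2 * n) =>
    T.lower.step i = false ∧ T.upper.step i = true).card

/-- Cover-inclusiveness: whenever a tile has a box strictly above a box of another tile,
its horizontal extent is contained in that of the other tile. -/
def CoverInclusive {n : ℕ} (T : DyckTiling n) : Prop :=
  ∀ t ∈ T.tiles, ∀ u ∈ T.tiles,
    (∃ p ∈ t, ∃ q ∈ u, (p : ℤ × ℤ).1 = (q : ℤ × ℤ).1 ∧ (q : ℤ × ℤ).2 < (p : ℤ × ℤ).2) →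
    ∀ p ∈ t, ∃ y : ℤ, ((p : ℤ × ℤ).1, y) ∈ u

end DyckTiling

/-- Height function of the spread at column `s` of a Dyck path. -/
def spreadHt {n : ℕ} (P : DyckPath n) (s x : ℤ) : ℤ :=
  if x < s then P.ht (x + 1) else if x = s then P.ht s + 1 else P.ht (x - 1)

/-- Spread of a tile at column `s`: points left of `s` move left, points right of `s`
move right, and a point at column `s` is duplicated upward. -/
def spreadTile (s : ℤ) (t : Finset (ℤ × ℤ)) : Finset (ℤ × ℤ) :=
  ((t.filter fun p => p.1 ≤ s).image fun p => (p.1 - 1, p.2)) ∪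
    ((t.filter fun p => p.1 = s).image fun p => (p.1, p.2 + 1)) ∪
    ((t.filter fun p => s ≤ p.1).image fun p => (p.1 + 1, p.2))

/-- Spread of a set of tiles at column `s`. -/
def spreadTiles (s : ℤ) (ts : Finset (Finset (ℤ × ℤ))) : Finset (Finset (ℤ × ℤ)) :=
  ts.image (spreadTile s)

/-- Column `c` is eligible for a tiling with upper-boundary height function `h` and
tile set `ts`: the upper boundary has an up step ending at column `c`, and its point at
column `c` is not the top corner of a one-box tile. -/
def EligibleCol (h : ℤ → ℤ) (ts : Finset (Finset (ℤ × ℤ))) (c : ℤ) : Prop :=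
  h c = h (c - 1) + 1 ∧ ({(c, h c - 2)} : Finset (ℤ × ℤ)) ∉ ts

/-- `T'` is the result of the strip-grow map applied to `(T, s)`: spread `T` at `s` and
add a one-box tile on each up step of the (spread) upper boundary starting at a column
`≥ s` (i.e. strictly to the right of column `s`). -/
def StripGrowRel {n : ℕ} (T : DyckTiling n) (s : ℤ) (T' : DyckTiling (n + 1)) : Prop :=
  (∀ x : ℤ, T'.lower.ht x = spreadHt T.lower s x) ∧
  (∀ x : ℤ, T'.upper.ht x =
    if s ≤ x ∧ spreadHt T.upper s (x + 1) = spreadHt T.upper s x + 1 then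
      spreadHt T.upper s x + 2
    else spreadHt T.upper s x) ∧
  T'.tiles = spreadTiles s T.tiles ∪
    ((Finset.Icc s (n : ℤ)).filter fun x =>
        spreadHt T.upper s (x + 1) = spreadHt T.upper s x + 1).image
      (fun x => ({(x, spreadHt T.upper s x)} : Finset (ℤ × ℤ)))

/-- `T'` is the result of the ribbon-grow map applied to `(T, s)`: spread `T` at `s`,
and if the special column `Q` of the spread tiling is strictly right of `s`, add a
ribbon of one-box tiles at all columns strictly between `s` and `Q`. -/
def RibbonGrowRel {n : ℕ} (T : DyckTiling n) (s : ℤ) (T' : DyckTiling (n + 1)) : Prop :=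
  (∀ x : ℤ, T'.lower.ht x = spreadHt T.lower s x) ∧
  ∃ Q : ℤ,
    EligibleCol (spreadHt T.upper s) (spreadTiles s T.tiles) Q ∧
    (∀ c : ℤ, EligibleCol (spreadHt T.upper s) (spreadTiles s T.tiles) c → c ≤ Q) ∧
    (∀ x : ℤ, T'.upper.ht x =
      if s < x ∧ x < Q then spreadHt T.upper s x + 2 else spreadHt T.upper s x) ∧
    T'.tiles = spreadTiles s T.tiles ∪
      (Finset.Ioo s Q).image (fun x => ({(x, spreadHt T.upper s x)} : Finset (ℤ × ℤ)))

/-- `s` is the special column of `T`: its rightmost eligible column. -/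
def SpecialCol {n : ℕ} (T : DyckTiling n) (s : ℤ) : Prop :=
  EligibleCol T.upper.ht T.tiles s ∧ ∀ c : ℤ, EligibleCol T.upper.ht T.tiles c → c ≤ s

/-- In the strip-shrink map applied to `T'` with special column `s`, a one-box tile is
removed at column `x`: `x` is right of `s` and there is a one-box tile there that is
part of an up step of the upper boundary. -/
def StripRemovedAt {n : ℕ} (T' : DyckTiling n) (s x : ℤ) : Prop :=
  s < x ∧ T'.upper.ht x = T'.upper.ht (x - 1) + 1 ∧
    ({(x, T'.upper.ht x - 2)} : Finset (ℤ × ℤ)) ∈ T'.tiles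

instance {n : ℕ} (T' : DyckTiling n) (s x : ℤ) : Decidable (StripRemovedAt T' s x) := by
  unfold StripRemovedAt; infer_instance

/-- `(T, s)` is the result of the strip-shrink map applied to `T'`: `s` is the special
column of `T'`; all one-box tiles right of `s` lying on up steps of the upper boundary
are removed; and the result is the spread of `T` at `s`. -/
def StripShrinkRel {n : ℕ} (T' : DyckTiling (n + 1)) (T : DyckTiling n) (s : ℤ) : Prop :=
  SpecialCol T' s ∧
  (∀ x : ℤ, spreadHt T.lower s x = T'.lower.ht x) ∧
  (∀ x : ℤ, spreadHt T.upper s x =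
    if StripRemovedAt T' s x then T'.upper.ht x - 2 else T'.upper.ht x) ∧
  spreadTiles s T.tiles =
    T'.tiles \ (((Finset.Ioc s ((n : ℤ) + 1)).filter fun x => StripRemovedAt T' s x).image
      fun x => ({(x, T'.upper.ht x - 2)} : Finset (ℤ × ℤ)))

/-- `(T, s)` is the result of the ribbon-shrink map applied to `T'`: `s` is the special
column of `T'`; the maximal run of topmost one-box tiles in columns `s+1, s+2, …` is
removed; and the result is the spread of `T` at `s`. -/
def RibbonShrinkRel {n : ℕ} (T' : DyckTiling (n + 1)) (T : DyckTiling n) (s : ℤ) : Prop :=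
  SpecialCol T' s ∧
  ∃ r : ℤ, s < r ∧
    (∀ x : ℤ, s < x → x < r → ({(x, T'.upper.ht x - 2)} : Finset (ℤ × ℤ)) ∈ T'.tiles) ∧
    ({(r, T'.upper.ht r - 2)} : Finset (ℤ × ℤ)) ∉ T'.tiles ∧
    (∀ x : ℤ, spreadHt T.lower s x = T'.lower.ht x) ∧
    (∀ x : ℤ, spreadHt T.upper s x =
      if s < x ∧ x < r then T'.upper.ht x - 2 else T'.upper.ht x) ∧
    spreadTiles s T.tiles =
      T'.tiles \ ((Finset.Ioo s r).image fun x => ({(x, T'.upper.ht x - 2)} : Finset (ℤ × ℤ)))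

/-- `IsDTS n p T`: `T` is the Dyck tiling `DTS(p_1, …, p_n)` (indices 0-based, so the
growth column for step `i` is `p i - i`). -/
inductive IsDTS : (n : ℕ) → (Fin n → ℕ) → DyckTiling n → Prop where
  | nil (p : Fin 0 → ℕ) (T : DyckTiling 0) : IsDTS 0 p T
  | cons (n : ℕ) (p : Fin (n + 1) → ℕ) (T : DyckTiling n) (T' : DyckTiling (n + 1)) :
      IsDTS n (fun i => p i.castSucc) T →
      StripGrowRel T ((p (Fin.last n) : ℤ) - n) T' → IsDTS (n + 1) p T'

/-- `IsDTR n p T`: `T` is the Dyck tiling `DTR(p_1, …, p_n)`. -/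
inductive IsDTR : (n : ℕ) → (Fin n → ℕ) → DyckTiling n → Prop where
  | nil (p : Fin 0 → ℕ) (T : DyckTiling 0) : IsDTR 0 p T
  | cons (n : ℕ) (p : Fin (n + 1) → ℕ) (T : DyckTiling n) (T' : DyckTiling (n + 1)) :
      IsDTR n (fun i => p i.castSucc) T →
      RibbonGrowRel T ((p (Fin.last n) : ℤ) - n) T' → IsDTR (n + 1) p T'

/-- `T = DTS(λ, σ)`. -/
def IsDTSof {n : ℕ} (lam : DyckPath n) (σ : Equiv.Perm (Fin n)) (T : DyckTiling n) : Prop :=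
  ∃ C : ChordLabeling lam, IsStandardization C.l σ ∧ IsDTS n (seqOf C) T

/-- `T = DTR(λ, σ)`. -/
def IsDTRof {n : ℕ} (lam : DyckPath n) (σ : Equiv.Perm (Fin n)) (T : DyckTiling n) : Prop :=
  ∃ C : ChordLabeling lam, IsStandardization C.l σ ∧ IsDTR n (seqOf C) T

/-- Increment `a` if it exceeds `p`. -/
def bump (p a : ℕ) : ℕ := if p < a then a + 1 else a

/-- The perfect matching `match(p_1, …, p_n)` of `{1, …, 2n}`. -/
def matchSeq : (n : ℕ) → (Fin n → ℕ) → Finset (ℕ × ℕ)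
  | 0, _ => ∅
  | n + 1, p =>
    ((matchSeq n fun i => p i.castSucc).image fun q =>
      (bump (p (Fin.last n)) q.1, bump (p (Fin.last n)) q.2)) ∪
      {(p (Fin.last n) + 1, 2 * (n + 1))}

/-- The number of nestings of a matching: pairs `(a,b)`, `(c,d)` with `c < a < b < d`. -/
def nestings (M : Finset (ℕ × ℕ)) : ℕ :=
  ((M ×ˢ M).filter fun q => q.2.1 < q.1.1 ∧ q.1.1 < q.1.2 ∧ q.1.2 < q.2.2).card

/-- `w` is the min-word of `M`: the list of the smaller elements of the pairs of `M`,
sorted by the larger elements. -/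
def IsMinWord (n : ℕ) (M : Finset (ℕ × ℕ)) (w : Fin n → ℕ) : Prop :=
  ∃ b : Fin n → ℕ, StrictMono b ∧ (∀ i, w i < b i) ∧
    M = Finset.univ.image fun i => (w i, b i)

/-- The number of tiles of `T` containing boxes over both endpoint columns of the
chord with endpoints at step positions `p < q`. -/
def chordTileCount {n : ℕ} (T : DyckTiling n) (p q : ℕ) : ℕ :=
  (T.tiles.filter fun t =>
    (∃ c ∈ t, (c : ℤ × ℤ).1 = (p : ℤ) + 1 - n) ∧ (∃ c ∈ t, (c : ℤ × ℤ).1 = (q : ℤ) - n)).card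

/-- A Dyck tableau of order `n` over the zigzag path `Z` of order `n+1`: a skew shape
`Z/μ` with `n` dots, one in each column of the skew shape through a valley of `Z`. -/
structure DyckTableau (n : ℕ) (Z : DyckPath (n + 1)) where
  upper : DyckPath (n + 1)
  below : ∀ x : ℤ, Z.ht x ≤ upper.ht x
  dots : Finset (ℤ × ℤ)
  sub : dots ⊆ skewCells Z upper
  card_dots : dots.card = n
  valley : ∀ x : ℤ, Z.ht (x - 1) = Z.ht x + 1 → Z.ht (x + 1) = Z.ht x + 1 →
    (dots.filter fun c => c.1 = x).card = 1

/-- The `q`-integer `[m]_q = 1 + q + ⋯ + q^(m-1)` as a polynomial. -/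
def qint (m : ℕ) : Polynomial ℤ := ∑ i ∈ Finset.range m, Polynomial.X ^ i

/-- The `q`-factorial `[n]_q!`. -/
def qfact (n : ℕ) : Polynomial ℤ := ∏ i ∈ Finset.range n, qint (i + 1)


/-! ### Chords and endpoint ranks -/

theorem IsChord.right_lt_of_left_mem {n : ℕ} {P : DyckPath n} {p q p' q' : ℕ}
    (h : IsChord P p q) (h' : IsChord P p' q') (hp : p < p') (hq : p' ≤ q) : q' < q := by
  obtain ⟨-, -, -, -, hend, habove⟩ := h
  obtain ⟨-, -, -, -, hend', habove'⟩ := h'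
  have hlow := habove p' hp hq
  by_contra hle
  rcases Nat.lt_or_ge q q' with hlt | hge
  · have := habove' (q + 1) (by omega) (by omega)
    omega
  · obtain rfl : q' = q := by omega
    omega

/-- The endpoints of each chord lie outside every chord with a larger index. -/
structure ChordWords (l r : ℕ → ℕ) (n : ℕ) : Prop where
  left_lt_right : ∀ i < n, l i < r i
  left_outside : ∀ j i, j < i → i < n → l j < l i ∨ r i < l j
  right_outside : ∀ j i, j < i → i < n → r j < l i ∨ r i < r j

theorem ChordWords.mono {l r : ℕ → ℕ} {m n : ℕ} (h : ChordWords l r n) (hmn : m ≤ n) :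
    ChordWords l r m where
  left_lt_right i hi := h.left_lt_right i (by omega)
  left_outside j i hji hi := h.left_outside j i hji (by omega)
  right_outside j i hji hi := h.right_outside j i hji (by omega)

/-- The number of endpoints smaller than `x` among the first `k` chords. -/
def endpointRank (l r : ℕ → ℕ) (k x : ℕ) : ℤ :=
  ∑ j ∈ range k, ((if l j < x then 1 else 0) + (if r j < x then 1 else 0))

theorem endpointRank_succ (l r : ℕ → ℕ) (k x : ℕ) :
    endpointRank l r (k + 1) x =
      endpointRank l r k x + ((if l k < x then 1 else 0) + (if r k < x then 1 else 0)) :=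
  Finset.sum_range_succ _ _

theorem endpointRank_mono (l r : ℕ → ℕ) (k : ℕ) {x y : ℕ} (h : x ≤ y) :
    endpointRank l r k x ≤ endpointRank l r k y := by
  refine Finset.sum_le_sum fun j _ => ?_
  split_ifs <;> omega

theorem endpointRank_nonneg (l r : ℕ → ℕ) (k x : ℕ) : 0 ≤ endpointRank l r k x :=
  Finset.sum_nonneg fun j _ => by split_ifs <;> norm_num

theorem endpointRank_le (l r : ℕ → ℕ) (k x : ℕ) : endpointRank l r k x ≤ 2 * k := by
  induction k with
  | zero => simp [endpointRank]
  | succ k ih =>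
    rw [endpointRank_succ]
    push_cast
    split_ifs <;> omega

theorem endpointRank_lt (l r : ℕ → ℕ) {k j x y : ℕ} (hj : j < k) (hx : l j = x ∨ r j = x)
    (h : x < y) : endpointRank l r k x < endpointRank l r k y := by
  refine Finset.sum_lt_sum (fun i _ => ?_) ⟨j, Finset.mem_range.2 hj, ?_⟩
  · split_ifs <;> omega
  · split_ifs <;> omega

/-- Inserting a new innermost chord moves by two the endpoints to its right. -/
theorem endpointRank_succ_of_endpoint {l r : ℕ → ℕ} {n j x : ℕ} (h : ChordWords l r (n + 1))
    (hj : j < n) (hx : l j = x ∨ r j = x) :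
    (x < l n ∧ endpointRank l r (n + 1) x = endpointRank l r n x ∧
        endpointRank l r n x < endpointRank l r n (l n)) ∨
      (r n < x ∧ endpointRank l r (n + 1) x = endpointRank l r n x + 2 ∧
        endpointRank l r n (l n) ≤ endpointRank l r n x) := by
  have h1 := h.left_lt_right n (by omega)
  have h2 := h.left_outside j n hj (by omega)
  have h3 := h.right_outside j n hj (by omega)
  have h4 : x < l n ∨ r n < x := by omega
  rw [endpointRank_succ]
  rcases h4 with h4 | h4
  · left
    refine ⟨h4, ?_, endpointRank_lt l r hj hx h4⟩
    rw [if_neg (by omega), if_neg (by omega)]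
    ring
  · right
    refine ⟨h4, ?_, endpointRank_mono l r n (by omega)⟩
    rw [if_pos (by omega), if_pos (by omega)]
    ring

theorem endpointRank_right_last {l r : ℕ → ℕ} {n : ℕ} (h : ChordWords l r (n + 1)) :
    endpointRank l r (n + 1) (r n) = endpointRank l r n (l n) + 1 := by
  have h1 := h.left_lt_right n (by omega)
  rw [endpointRank_succ, if_pos h1, if_neg (by omega)]
  have : endpointRank l r n (r n) = endpointRank l r n (l n) := by
    refine Finset.sum_congr rfl fun j hj => ?_
    have hj := Finset.mem_range.1 hj
    have h2 := h.left_outside j n hj (by omega)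
    have h3 := h.right_outside j n hj (by omega)
    split_ifs <;> omega
  omega

theorem endpointRank_left_last {l r : ℕ → ℕ} {n : ℕ} (h : ChordWords l r (n + 1)) :
    endpointRank l r (n + 1) (l n) = endpointRank l r n (l n) := by
  have h1 := h.left_lt_right n (by omega)
  rw [endpointRank_succ, if_neg (by omega), if_neg (by omega)]
  ring

/-! ### Heights of Dyck paths -/

namespace DyckPath

theorem ht_zero (P : DyckPath 0) (x : ℤ) : P.ht x = 0 := by
  simp [ht]

variable {n : ℕ}

theorem ht_nonneg (P : DyckPath n) {x : ℤ} (h1 : -n ≤ x) (h2 : x ≤ n) : 0 ≤ P.ht x := by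
  have h := P.nonneg (x + n).toNat (by omega)
  have hlt : ∀ i : Fin (2 * n), (i : ℕ) < (x + n).toNat ↔ ((i : ℕ) : ℤ) < x + n := by
    intro i; omega
  simp only [hlt] at h
  unfold ht
  omega

theorem ht_le (P : DyckPath n) (x : ℤ) : P.ht x ≤ n := by
  have h : (Finset.univ.filter fun i : Fin (2 * n) =>
      ((i : ℕ) : ℤ) < x + n ∧ P.step i = true).card ≤ n :=
    (Finset.card_le_card (Finset.monotone_filter_right _ fun i _ h => h.2)).trans_eq P.balanced
  unfold ht
  omega

theorem ht_parity (P : DyckPath n) {x : ℤ} (h1 : -n ≤ x) (h2 : x ≤ n) :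
    (P.ht x - x - n) % 2 = 0 := by
  have hcount : (Finset.univ.filter fun i : Fin (2 * n) =>
        ((i : ℕ) : ℤ) < x + n ∧ P.step i = true).card +
      (Finset.univ.filter fun i : Fin (2 * n) =>
        ((i : ℕ) : ℤ) < x + n ∧ P.step i = false).card = (x + n).toNat := by
    have hsplit := Finset.card_filter_add_card_filter_not
      (s := Finset.univ.filter fun i : Fin (2 * n) => ((i : ℕ) : ℤ) < x + n)
      (fun i => P.step i = true)
    simp only [Finset.filter_filter, Bool.not_eq_true] at hsplit
    rw [hsplit]
    have hlt : ∀ i : Fin (2 * n), ((i : ℕ) : ℤ) < x + n ↔ (i : ℕ) < (x + n).toNat := by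
      intro i; omega
    simp only [hlt]
    rw [Fin.card_filter_val_lt]
    omega
  unfold ht
  omega

end DyckPath

/-- The area is half the total height difference between the two boundary paths. -/
theorem DyckTiling.two_mul_area {n : ℕ} (T : DyckTiling n) :
    2 * (T.area : ℤ) = ∑ x ∈ Finset.Icc (-(n : ℤ)) n, (T.upper.ht x - T.lower.ht x) := by
  have hcol : T.area = ∑ x ∈ Finset.Icc (-(n : ℤ)) n,
      ((skewCells T.lower T.upper).filter fun c => c.1 = x).card :=
    Finset.card_eq_sum_card_fiberwise fun c hc => by
      simp only [skewCells, coe_filter, mem_product, Set.mem_ofPred_eq] at hc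
      exact hc.1.1
  rw [hcol]
  push_cast
  rw [Finset.mul_sum]
  refine Finset.sum_congr rfl fun x hx => ?_
  obtain ⟨h1, h2⟩ := Finset.mem_Icc.1 hx
  have hlow := T.lower.ht_nonneg h1 h2
  have hle := T.upper.ht_le x
  have hpl := T.lower.ht_parity h1 h2
  have hpu := T.upper.ht_parity h1 h2
  have hb := T.below x
  have hfiber : ((skewCells T.lower T.upper).filter fun c => c.1 = x) =
      (range ((T.upper.ht x - T.lower.ht x) / 2).toNat).image
        fun k : ℕ => (x, T.lower.ht x + 2 * k) := by
    ext ⟨y, z⟩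
    simp only [skewCells, mem_filter, mem_product, mem_Icc, mem_image, mem_range,
      Prod.mk.injEq]
    constructor
    · rintro ⟨⟨-, hz1, hz2, hz3⟩, rfl⟩
      exact ⟨((z - T.lower.ht y) / 2).toNat, by omega, rfl, by omega⟩
    · rintro ⟨k, hk, rfl, rfl⟩
      refine ⟨⟨⟨⟨h1, h2⟩, ?_, ?_⟩, ?_, ?_, ?_⟩, rfl⟩ <;> omega
  rw [hfiber, Finset.card_image_of_injective, Finset.card_range]
  · omega
  · intro a b hab
    have := (Prod.ext_iff.1 hab).2
    simp only at this
    omega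

/-! ### Spreading tiles -/

theorem mem_spreadTile {s : ℤ} {t : Finset (ℤ × ℤ)} {y z : ℤ} :
    (y, z) ∈ spreadTile s t ↔
      (y < s ∧ (y + 1, z) ∈ t) ∨ (y = s ∧ (s, z - 1) ∈ t) ∨ (s < y ∧ (y - 1, z) ∈ t) := by
  simp only [spreadTile, mem_union, mem_image, mem_filter, Prod.exists, Prod.mk.injEq]
  constructor
  · rintro ((⟨a, b, ⟨h, h'⟩, h1, rfl⟩ | ⟨a, b, ⟨h, rfl⟩, rfl, rfl⟩) | ⟨a, b, ⟨h, h'⟩, h1, rfl⟩)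
    · left
      obtain rfl : a = y + 1 := by omega
      exact ⟨by omega, h⟩
    · right; left
      exact ⟨rfl, by simpa using h⟩
    · right; right
      obtain rfl : a = y - 1 := by omega
      exact ⟨by omega, h⟩
  · rintro (⟨h, h'⟩ | ⟨rfl, h'⟩ | ⟨h, h'⟩)
    · exact Or.inl (Or.inl ⟨_, _, ⟨h', by omega⟩, by omega, rfl⟩)
    · exact Or.inl (Or.inr ⟨_, _, ⟨h', rfl⟩, rfl, by omega⟩)
    · exact Or.inr ⟨_, _, ⟨h', by omega⟩, by omega, rfl⟩

theorem spreadTile_injective (s : ℤ) : Function.Injective (spreadTile s) := by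
  intro t u h
  ext ⟨x, z⟩
  rcases le_or_gt x s with hx | hx
  · have := Finset.ext_iff.1 h (x - 1, z)
    rw [mem_spreadTile, mem_spreadTile] at this
    have h1 : x - 1 < s := by omega
    have h2 : ¬ x - 1 = s := by omega
    have h3 : ¬ s < x - 1 := by omega
    simpa [h1, h2, h3] using this
  · have := Finset.ext_iff.1 h (x + 1, z)
    rw [mem_spreadTile, mem_spreadTile] at this
    have h1 : ¬ x + 1 < s := by omega
    have h2 : ¬ x + 1 = s := by omega
    have h3 : s < x + 1 := by omega
    simpa [h1, h2, h3] using this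

theorem card_spreadTiles (s : ℤ) (ts : Finset (Finset (ℤ × ℤ))) :
    (spreadTiles s ts).card = ts.card :=
  Finset.card_image_of_injective _ (spreadTile_injective s)

theorem spreadTile_singleton {s c : ℤ} (h : s < c) (z : ℤ) :
    spreadTile s {(c, z)} = {(c + 1, z)} := by
  ext ⟨x, y⟩
  simp only [mem_spreadTile, mem_singleton, Prod.mk.injEq]
  omega

theorem singleton_mem_spreadTiles {s c z : ℤ} (h : s + 1 < c)
    (ts : Finset (Finset (ℤ × ℤ))) :
    ({(c, z)} : Finset (ℤ × ℤ)) ∈ spreadTiles s ts ↔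
      ({(c - 1, z)} : Finset (ℤ × ℤ)) ∈ ts := by
  have key := spreadTile_singleton (s := s) (c := c - 1) (by omega) z
  rw [sub_add_cancel] at key
  rw [← key]
  simp only [spreadTiles]
  exact (spreadTile_injective s).mem_finset_image

theorem singleton_notMem_spreadTiles (s z : ℤ) (ts : Finset (Finset (ℤ × ℤ))) :
    ({(s, z)} : Finset (ℤ × ℤ)) ∉ spreadTiles s ts := by
  intro h
  obtain ⟨t, -, ht⟩ := Finset.mem_image.1 h
  have h1 : (s, z) ∈ spreadTile s t := by rw [ht]; simp
  have h2 : (s, z - 1) ∈ t := by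
    rw [mem_spreadTile] at h1
    simpa using h1
  have h3 : (s - 1, z - 1) ∈ spreadTile s t :=
    mem_spreadTile.2 (Or.inl ⟨by omega, by simpa using h2⟩)
  rw [ht] at h3
  simp at h3

theorem spreadHt_of_lt {n : ℕ} (P : DyckPath n) {s x : ℤ} (h : x < s) :
    spreadHt P s x = P.ht (x + 1) := if_pos h

theorem spreadHt_self {n : ℕ} (P : DyckPath n) (s : ℤ) :
    spreadHt P s s = P.ht s + 1 := by simp [spreadHt]

theorem spreadHt_of_gt {n : ℕ} (P : DyckPath n) {s x : ℤ} (h : s < x) :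
    spreadHt P s x = P.ht (x - 1) := by
  rw [spreadHt, if_neg (by omega), if_neg (by omega)]

namespace DyckTiling

variable {n : ℕ}

theorem cell_le_upper (T : DyckTiling n) {t : Finset (ℤ × ℤ)} (ht : t ∈ T.tiles)
    {c : ℤ × ℤ} (hc : c ∈ t) : c.2 + 2 ≤ T.upper.ht c.1 := by
  have h : c ∈ T.tiles.biUnion id := Finset.mem_biUnion.2 ⟨t, ht, hc⟩
  rw [T.cover, skewCells, Finset.mem_filter] at h
  exact h.2.2.1

theorem eligibleCol_spread_self (T : DyckTiling n) (s : ℤ) :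
    EligibleCol (spreadHt T.upper s) (spreadTiles s T.tiles) s := by
  refine ⟨?_, singleton_notMem_spreadTiles _ _ _⟩
  rw [spreadHt_self, spreadHt_of_lt _ (by omega), sub_add_cancel]

theorem eligibleCol_spread_of_gt (T : DyckTiling n) {s c : ℤ} (h : s < c) :
    EligibleCol (spreadHt T.upper s) (spreadTiles s T.tiles) c ↔
      s + 1 < c ∧ EligibleCol T.upper.ht T.tiles (c - 1) := by
  rcases eq_or_lt_of_le (show s + 1 ≤ c by omega) with rfl | hc
  · refine iff_of_false (fun H => ?_) (fun H => absurd H.1 (lt_irrefl _))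
    have := H.1
    rw [spreadHt_of_gt _ h, add_sub_cancel_right, spreadHt_self] at this
    omega
  · unfold EligibleCol
    rw [spreadHt_of_gt _ h, spreadHt_of_gt _ (show s < c - 1 by omega),
      singleton_mem_spreadTiles hc]
    simp [hc]

/-- A tile of the spread tiling is not a new tile of the ribbon. -/
theorem disjoint_spreadTiles_ribbon (T : DyckTiling n) (s Q : ℤ) :
    Disjoint (spreadTiles s T.tiles)
      ((Finset.Ioo s Q).image
        (fun x => ({(x, spreadHt T.upper s x)} : Finset (ℤ × ℤ)))) := by
  rw [Finset.disjoint_left]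
  intro t ht ht'
  obtain ⟨x, hx, rfl⟩ := Finset.mem_image.1 ht'
  have hx := (Finset.mem_Ioo.1 hx).1
  obtain ⟨u, hu, hux⟩ := Finset.mem_image.1 ht
  have hmem : (x, spreadHt T.upper s x) ∈ spreadTile s u := by rw [hux]; simp
  rw [mem_spreadTile] at hmem
  have hmem' : (x - 1, spreadHt T.upper s x) ∈ u := by
    rcases hmem with ⟨h, -⟩ | ⟨h, -⟩ | ⟨-, h⟩
    · omega
    · omega
    · exact h
  have := T.cell_le_upper hu hmem'
  rw [spreadHt_of_gt _ hx] at this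
  simp only at this
  omega

end DyckTiling

section RibbonGrow

variable {n : ℕ} {T : DyckTiling n} {s : ℤ} {T' : DyckTiling (n + 1)}

/-- The column at which a tiling is grown becomes its special column. -/
theorem RibbonGrowRel.specialCol (h : RibbonGrowRel T s T') : SpecialCol T' s := by
  obtain ⟨-, Q, hQ, hmax, hup, htiles⟩ := h
  have hsQ : s ≤ Q := hmax s (T.eligibleCol_spread_self s)
  have hmem : ∀ x z : ℤ, ({(x, z)} : Finset (ℤ × ℤ)) ∈ T'.tiles ↔
      ({(x, z)} : Finset (ℤ × ℤ)) ∈ spreadTiles s T.tiles ∨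
        (s < x ∧ x < Q ∧ z = spreadHt T.upper s x) := by
    intro x z
    rw [htiles, Finset.mem_union, Finset.mem_image]
    refine or_congr_right ⟨?_, ?_⟩
    · rintro ⟨y, hy, hyx⟩
      have hyx := Finset.singleton_injective hyx
      simp only [Prod.mk.injEq] at hyx
      obtain ⟨rfl, rfl⟩ := hyx
      have := Finset.mem_Ioo.1 hy
      exact ⟨this.1, this.2, rfl⟩
    · rintro ⟨h1, h2, rfl⟩
      exact ⟨x, Finset.mem_Ioo.2 ⟨h1, h2⟩, rfl⟩
  constructor
  · obtain ⟨h1, h2⟩ := T.eligibleCol_spread_self s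
    refine ⟨?_, ?_⟩
    · rw [hup, hup, if_neg (by omega), if_neg (by omega)]
      exact h1
    · rw [hmem, hup, if_neg (by omega)]
      rintro (h | ⟨h, -⟩)
      · exact h2 h
      · omega
  · rintro c ⟨hc1, hc2⟩
    by_contra hsc
    rw [not_le] at hsc
    rw [hmem] at hc2
    rcases lt_trichotomy c Q with hcQ | rfl | hcQ
    · refine hc2 (Or.inr ⟨hsc, hcQ, ?_⟩)
      rw [hup, if_pos ⟨hsc, hcQ⟩]
      omega
    · have h1 := hQ.1
      have h2 := ((T.eligibleCol_spread_of_gt hsc).1 hQ).1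
      rw [hup, hup, if_neg (by omega), if_pos (by omega)] at hc1
      omega
    · have hnot : ¬ c ≤ Q := by omega
      refine hnot (hmax c ⟨?_, ?_⟩)
      · rwa [hup, hup, if_neg (by omega), if_neg (by omega)] at hc1
      · intro h
        refine hc2 (Or.inl ?_)
        rwa [hup, if_neg (by omega)]

/-- The effect of ribbon growth when no column right of the growth column is eligible. -/
theorem RibbonGrowRel.of_no_ribbon (h : RibbonGrowRel T s T')
    (hT : ∀ c, EligibleCol T.upper.ht T.tiles c → c ≤ s) :
    (∀ x, T'.upper.ht x - T'.lower.ht x = spreadHt T.upper s x - spreadHt T.lower s x) ∧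
      T'.numTiles = T.numTiles := by
  obtain ⟨hlow, Q, hQ, hmax, hup, htiles⟩ := h
  have hsQ : s ≤ Q := hmax s (T.eligibleCol_spread_self s)
  obtain rfl : s = Q := by
    by_contra hne
    have := (T.eligibleCol_spread_of_gt (lt_of_le_of_ne hsQ hne)).1 hQ
    have := hT _ this.2
    omega
  refine ⟨fun x => ?_, ?_⟩
  · rw [hlow, hup, if_neg (by omega)]
  · simp [DyckTiling.numTiles, htiles, card_spreadTiles]

/-- The effect of ribbon growth strictly left of the special column. -/
theorem RibbonGrowRel.of_ribbon (h : RibbonGrowRel T s T') {c : ℤ} (hc : SpecialCol T c)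
    (hsc : s < c) :
    (∀ x, T'.upper.ht x - T'.lower.ht x = spreadHt T.upper s x - spreadHt T.lower s x +
        if s < x ∧ x < c + 1 then 2 else 0) ∧
      (T'.numTiles : ℤ) = T.numTiles + (c - s) := by
  obtain ⟨hlow, Q, hQ, hmax, hup, htiles⟩ := h
  obtain rfl : Q = c + 1 := by
    have h1 : c + 1 ≤ Q := by
      refine hmax _ ((T.eligibleCol_spread_of_gt (by omega)).2 ⟨by omega, ?_⟩)
      simpa using hc.1
    have h2 := hc.2 _ ((T.eligibleCol_spread_of_gt (by omega)).1 hQ).2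
    omega
  refine ⟨fun x => ?_, ?_⟩
  · rw [hlow, hup]
    split_ifs <;> ring
  · rw [DyckTiling.numTiles, htiles,
      Finset.card_union_of_disjoint (T.disjoint_spreadTiles_ribbon _ _), card_spreadTiles,
      Finset.card_image_of_injective _ fun x y hxy => ?_]
    · rw [Int.card_Ioo, DyckTiling.numTiles]
      push_cast
      omega
    · exact (Prod.ext_iff.1 (Finset.singleton_injective hxy)).1

end RibbonGrow

/-! ### The height difference and the number of tiles of a ribbon-grown tiling -/

/-- The ribbon created at the descent `i` covers the point number `m`. -/
def ribbonCover (l r : ℕ → ℕ) (n i : ℕ) (m : ℤ) : Prop :=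
  l (i + 1) < l i ∧ endpointRank l r n (r (i + 1)) < m ∧ m ≤ endpointRank l r n (l i)

open Classical in
theorem DyckTiling.ribbon_invariants (l r p : ℕ → ℕ) :
    ∀ (n : ℕ) (T : DyckTiling n), ChordWords l r n →
      (∀ i < n, (p i : ℤ) = endpointRank l r i (l i)) →
      IsDTR n (fun i => p i) T →
      (∀ x : ℤ, T.upper.ht x - T.lower.ht x =
        2 * ∑ i ∈ range (n - 1), if ribbonCover l r n i (x + n) then 1 else 0) ∧
      (∀ m, n = m + 1 → SpecialCol T ((p m : ℤ) - m)) ∧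
      (T.numTiles : ℤ) = ∑ i ∈ range (n - 1),
        if l (i + 1) < l i then (p i : ℤ) + 1 - p (i + 1) else 0 := by
  intro n
  induction n with
  | zero =>
    intro T _ _ _
    refine ⟨fun x => by simp [DyckPath.ht_zero], fun m hm => by omega, ?_⟩
    have : T.tiles = ∅ := by
      rw [Finset.eq_empty_iff_forall_notMem]
      intro t ht
      obtain ⟨a, b, f, hab, -, -, -, rfl⟩ := T.isDyck t ht
      have hmem : ((a, f a) : ℤ × ℤ) ∈ T.tiles.biUnion id :=
        Finset.mem_biUnion.2
          ⟨_, ht, Finset.mem_image_of_mem _ (Finset.left_mem_Icc.2 hab)⟩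
      rw [T.cover, skewCells, Finset.mem_filter] at hmem
      have h1 := hmem.2.1
      have h2 := hmem.2.2.1
      rw [DyckPath.ht_zero] at h1 h2
      simp only at h1 h2
      omega
    simp [DyckTiling.numTiles, this]
  | succ n ih =>
    intro T' hw hp hT'
    cases hT' with
    | cons _ _ T _ hT hgrow =>
    obtain ⟨hdiff, hspec, htiles⟩ := ih T (hw.mono (by omega)) (fun i hi => hp i (by omega)) hT
    simp only [Fin.val_last] at hgrow
    have hpn := hp n (by omega)
    have hspread : ∀ x : ℤ,
        spreadHt T.upper ((p n : ℤ) - n) x - spreadHt T.lower ((p n : ℤ) - n) x =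
        2 * ∑ i ∈ range (n - 1),
          if ribbonCover l r (n + 1) i (x + (n + 1)) then 1 else 0 := by
      intro x
      have hy : ∃ y, spreadHt T.upper ((p n : ℤ) - n) x - spreadHt T.lower ((p n : ℤ) - n) x =
          T.upper.ht y - T.lower.ht y ∧
          ((x < p n - n ∧ y = x + 1) ∨ (x = p n - n ∧ y = x) ∨ (p n - n < x ∧ y = x - 1)) := by
        rcases lt_trichotomy x ((p n : ℤ) - n) with h | h | h
        · exact ⟨x + 1, by rw [spreadHt_of_lt _ h, spreadHt_of_lt _ h], by omega⟩
        · exact ⟨x, by rw [h, spreadHt_self, spreadHt_self]; ring, by omega⟩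
        · exact ⟨x - 1, by rw [spreadHt_of_gt _ h, spreadHt_of_gt _ h], by omega⟩
      obtain ⟨y, hy, hxy⟩ := hy
      rw [hy, hdiff]
      congr 1
      refine Finset.sum_congr rfl fun i hi => if_congr ?_ rfl rfl
      have hi := Finset.mem_range.1 hi
      have h1 := endpointRank_succ_of_endpoint hw (j := i) (by omega) (Or.inl rfl)
      have h2 := endpointRank_succ_of_endpoint hw (j := i + 1) (by omega) (Or.inr rfl)
      unfold ribbonCover
      omega
    suffices h : (∀ x : ℤ, T'.upper.ht x - T'.lower.ht x =
        2 * ∑ i ∈ range n, if ribbonCover l r (n + 1) i (x + (n + 1)) then 1 else 0) ∧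
        (T'.numTiles : ℤ) = ∑ i ∈ range n,
          if l (i + 1) < l i then (p i : ℤ) + 1 - p (i + 1) else 0 by
      refine ⟨by push_cast; exact h.1, fun m hm => ?_, h.2⟩
      obtain rfl : n = m := by omega
      exact hgrow.specialCol
    rcases n with _ | m
    · obtain ⟨g1, g2⟩ := hgrow.of_no_ribbon fun c hc => by simpa [T.upper.ht_zero] using hc.1
      exact ⟨fun x => by rw [g1, hspread], by rw [g2, htiles]⟩
    · have hsp := hspec m rfl
      have hpm := hp m (by omega)
      have hlast := endpointRank_left_last (hw.mono (Nat.le_succ (m + 1)))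
      have hright := endpointRank_right_last hw
      have hshift := endpointRank_succ_of_endpoint hw (j := m) (by omega) (Or.inl rfl)
      have hlr := hw.left_lt_right (m + 1) (by omega)
      simp only [Nat.add_sub_cancel] at hspread htiles
      by_cases hdes : l (m + 1) < l m
      · obtain ⟨g1, g2⟩ := hgrow.of_ribbon hsp (by push_cast; omega)
        refine ⟨fun x => ?_, ?_⟩
        · have hlastRibbon : ribbonCover l r (m + 1 + 1) m (x + (↑(m + 1) + 1)) ↔
              (p (m + 1) : ℤ) - ↑(m + 1) < x ∧ x < (p m : ℤ) - m + 1 := by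
            unfold ribbonCover
            push_cast
            omega
          rw [g1, hspread, Finset.sum_range_succ, if_congr hlastRibbon rfl rfl]
          split_ifs <;> ring
        · rw [g2, htiles, Finset.sum_range_succ, if_pos hdes]
          push_cast
          ring
      · obtain ⟨g1, g2⟩ := hgrow.of_no_ribbon fun c hc => by
          have := hsp.2 c hc
          push_cast
          omega
        refine ⟨fun x => ?_, ?_⟩
        · rw [g1, hspread, Finset.sum_range_succ, if_neg fun h => hdes h.1, add_zero]
        · rw [g2, htiles, Finset.sum_range_succ, if_neg hdes, add_zero]

/-- Each ribbon contributes to the area the number of endpoints it spans. -/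
theorem DyckTiling.area_eq_sum_endpointRank {l r p : ℕ → ℕ} {n : ℕ} {T : DyckTiling n}
    (hw : ChordWords l r n) (hp : ∀ i < n, (p i : ℤ) = endpointRank l r i (l i))
    (hT : IsDTR n (fun i => p i) T) :
    (T.area : ℤ) = ∑ i ∈ range (n - 1), if l (i + 1) < l i then
      endpointRank l r n (l i) - endpointRank l r n (r (i + 1)) else 0 := by
  classical
  have hdiff := (DyckTiling.ribbon_invariants l r p n T hw hp hT).1
  have harea := T.two_mul_area
  simp only [hdiff] at harea
  rw [← Finset.mul_sum, Finset.sum_comm] at harea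
  rw [mul_left_cancel₀ two_ne_zero harea]
  refine Finset.sum_congr rfl fun i hi => ?_
  have hi := Finset.mem_range.1 hi
  split_ifs with hdes
  · have hout := hw.left_outside i (i + 1) (by omega) (by omega)
    have hmono := endpointRank_mono l r n (show r (i + 1) ≤ l i by omega)
    have h0 := endpointRank_nonneg l r n (r (i + 1))
    have h1 := endpointRank_le l r n (l i)
    rw [Finset.sum_boole]
    have hcells : ((Finset.Icc (-(n : ℤ)) n).filter fun x => ribbonCover l r n i (x + n)) =
        Finset.Ioc (endpointRank l r n (r (i + 1)) - n) (endpointRank l r n (l i) - n) := by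
      ext x
      rw [mem_filter, mem_Icc, mem_Ioc, ribbonCover]
      omega
    rw [hcells, Int.card_Ioc]
    omega
  · exact Finset.sum_eq_zero fun x _ => if_neg fun h => hdes h.1

/-! ### Descents and standardizations -/

theorem IsStandardization.val_eq_sum {n : ℕ} {w : Fin n → ℕ} {σ : Equiv.Perm (Fin n)}
    (h : IsStandardization w σ) (i : Fin n) :
    ((σ i : ℕ) : ℤ) = ∑ k, if w k < w i then 1 else 0 := by
  rw [Finset.sum_boole]
  have hcard : (Finset.univ.filter fun k => w k < w i).card = (Finset.Iio (σ i)).card := by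
    rw [← Finset.card_map σ.toEmbedding]
    congr 1
    ext k
    simp only [mem_map_equiv, mem_filter, mem_univ, true_and, mem_Iio]
    rw [← h _ _, Equiv.apply_symm_apply]
  rw [hcard, Fin.card_Iio]

/-- The extension by zero of a finite word to all indices. -/
def extendWord {n : ℕ} (w : Fin n → ℕ) (i : ℕ) : ℕ := if h : i < n then w ⟨i, h⟩ else 0

theorem extendWord_val {n : ℕ} (w : Fin n → ℕ) (i : Fin n) : extendWord w i = w i := by
  simp [extendWord]

theorem extendWord_of_lt {n : ℕ} (w : Fin n → ℕ) {i : ℕ} (h : i < n) :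
    extendWord w i = w ⟨i, h⟩ := dif_pos h

theorem val_nextIdx {n : ℕ} {i : Fin n} (h : (i : ℕ) + 1 < n) : (nextIdx i : ℕ) = i + 1 :=
  Nat.mod_eq_of_lt h

theorem ChordLabeling.chordWords {n : ℕ} {P : DyckPath n} (C : ChordLabeling P) :
    ChordWords (extendWord C.l) (extendWord C.r) n := by
  have hlr : ∀ i, C.l i < C.r i := fun i => (C.chord i).1
  have key : ∀ j i : Fin n, j < i →
      (C.l j < C.l i ∨ C.r i < C.l j) ∧ (C.r j < C.l i ∨ C.r i < C.r j) := by
    intro j i hji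
    have hne : C.l j ≠ C.l i := fun h => hji.ne (C.inj h)
    have hnest : ¬ (C.l i < C.l j ∧ C.l j ≤ C.r i) := fun ⟨h1, h2⟩ =>
      hji.not_gt (C.natural j i h1 ((C.chord i).right_lt_of_left_mem (C.chord j) h1 h2))
    have hcross : C.l j < C.l i → C.l i ≤ C.r j → C.r i < C.r j :=
      (C.chord j).right_lt_of_left_mem (C.chord i)
    have h1 := hlr i
    have h2 := hlr j
    omega
  refine ⟨fun i hi => ?_, fun j i hji hi => ?_, fun j i hji hi => ?_⟩
  · rw [extendWord_of_lt _ hi, extendWord_of_lt _ hi]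
    exact hlr _
  all_goals
    simp only [extendWord_of_lt _ hi, extendWord_of_lt _ (hji.trans hi)]
  · exact (key ⟨j, hji.trans hi⟩ ⟨i, hi⟩ hji).1
  · exact (key ⟨j, hji.trans hi⟩ ⟨i, hi⟩ hji).2

/-- The rank among the first `k` chords as a sum over all chords. -/
theorem endpointRank_extendWord {n : ℕ} (l r : Fin n → ℕ) {k : ℕ} (hk : k ≤ n) (x : ℕ) :
    endpointRank (extendWord l) (extendWord r) k x =
      ∑ j : Fin n, ((if (j : ℕ) < k ∧ l j < x then 1 else 0) +
        (if (j : ℕ) < k ∧ r j < x then 1 else 0)) := by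
  have h := Finset.sum_range (n := n) fun j =>
    (if j < k ∧ extendWord l j < x then (1 : ℤ) else 0) +
      (if j < k ∧ extendWord r j < x then 1 else 0)
  simp only [extendWord_val] at h
  rw [← h, endpointRank]
  rw [← Finset.sum_subset (Finset.range_subset_range.2 hk)]
  · refine Finset.sum_congr rfl fun j hj => ?_
    simp [Finset.mem_range.1 hj]
  · intro j _ hj
    simp [Finset.mem_range.not.1 hj]

theorem seqOf_eq_endpointRank {n : ℕ} {P : DyckPath n} (C : ChordLabeling P) (i : Fin n) :
    (seqOf C i : ℤ) = endpointRank (extendWord C.l) (extendWord C.r) i (C.l i) := by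
  rw [endpointRank_extendWord _ _ i.2.le, Finset.sum_add_distrib, Finset.sum_boole,
    Finset.sum_boole, seqOf]
  push_cast
  rfl

/-- A sum over the descents of a standardization as a sum over a range. -/
theorem IsStandardization.sum_descentFinset {n : ℕ} {w : Fin n → ℕ} {σ : Equiv.Perm (Fin n)}
    (h : IsStandardization w σ) (f : Fin n → ℤ) (g : ℕ → ℤ)
    (hfg : ∀ i : Fin n, (i : ℕ) + 1 < n → w (nextIdx i) < w i → f i = g i) :
    ∑ i ∈ descentFinset (permWord σ), f i = ∑ i ∈ range (n - 1),
      if extendWord w (i + 1) < extendWord w i then g i else 0 := by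
  have hmem : ∀ i : Fin n, i ∈ descentFinset (permWord σ) ↔
      (i : ℕ) + 1 < n ∧ extendWord w (i + 1) < extendWord w i := by
    intro i
    simp only [descentFinset, mem_filter, mem_univ, true_and]
    refine and_congr_right fun hi => ?_
    rw [← val_nextIdx hi, extendWord_val, extendWord_val, ← h]
    rfl
  rw [← Finset.sum_filter]
  refine Finset.sum_bij (fun i _ => (i : ℕ)) ?_ (fun a _ b _ hab => Fin.ext hab) ?_ ?_
  · intro i hi
    rw [hmem] at hi
    simp only [mem_filter, mem_range]
    exact ⟨by omega, hi.2⟩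
  · intro i hi
    simp only [mem_filter, mem_range] at hi
    exact ⟨⟨i, by omega⟩, (hmem _).2 ⟨by simp only; omega, hi.2⟩, rfl⟩
  · intro i hi
    rw [hmem] at hi
    refine hfg i hi.1 ?_
    have := hi.2
    rwa [← val_nextIdx hi.1, extendWord_val, extendWord_val] at this

theorem IsStandardization.mem_remSet {n : ℕ} {w : Fin n → ℕ} {σ : Equiv.Perm (Fin n)}
    (h : IsStandardization w σ) (i k : Fin n) :
    k ∈ remSet (permWord σ) i ↔ i < k ∧ w (nextIdx i) < w k ∧ w k < w i := by
  rw [← h _ _, ← h _ _]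
  simp only [remSet, mem_filter, mem_univ, true_and]
  rfl

section DescentContribution

variable {n : ℕ} {P : DyckPath n} (C : ChordLabeling P) {σ τ : Equiv.Perm (Fin n)}

/-- The endpoints of each chord lie outside every chord with a larger label. -/
theorem ChordLabeling.endpoints_outside {j i : Fin n} (hji : (j : ℕ) < i) :
    (C.l j < C.l i ∨ C.r i < C.l j) ∧ (C.r j < C.l i ∨ C.r i < C.r j) := by
  have h2 := C.chordWords.left_outside j i hji i.2
  have h3 := C.chordWords.right_outside j i hji i.2
  simp only [extendWord_val] at h2 h3
  exact ⟨h2, h3⟩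

/-- The relative positions of an arbitrary chord and the two chords of a descent. -/
theorem ChordLabeling.descent_positions {i : Fin n} (hi : (i : ℕ) + 1 < n)
    (hdes : C.l (nextIdx i) < C.l i) (k : Fin n) :
    C.r (nextIdx i) < C.l i ∧ C.l (nextIdx i) < C.r (nextIdx i) ∧ C.l i < C.r i ∧
      C.l k < C.r k ∧
      (((k : ℕ) = i ∧ C.l k = C.l i ∧ C.r k = C.r i) ∨
        ((k : ℕ) = i + 1 ∧ C.l k = C.l (nextIdx i) ∧ C.r k = C.r (nextIdx i)) ∨
        ((k : ℕ) < i ∧ (C.l k < C.l i ∨ C.r i < C.l k) ∧ (C.r k < C.l i ∨ C.r i < C.r k) ∧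
          (C.l k < C.l (nextIdx i) ∨ C.r (nextIdx i) < C.l k) ∧
          (C.r k < C.l (nextIdx i) ∨ C.r (nextIdx i) < C.r k)) ∨
        (i + 1 < (k : ℕ) ∧ (C.l i < C.l k ∨ C.r k < C.l i) ∧ (C.r i < C.l k ∨ C.r k < C.r i) ∧
          (C.l (nextIdx i) < C.l k ∨ C.r k < C.l (nextIdx i)) ∧
          (C.r (nextIdx i) < C.l k ∨ C.r k < C.r (nextIdx i)))) := by
  have hnext := val_nextIdx hi
  have h1 := C.endpoints_outside (j := i) (i := nextIdx i) (by omega)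
  refine ⟨by omega, (C.chord _).1, (C.chord _).1, (C.chord _).1, ?_⟩
  rcases lt_trichotomy (k : ℕ) i with h | h | h
  · have h2 := C.endpoints_outside (j := k) (i := i) h
    have h3 := C.endpoints_outside (j := k) (i := nextIdx i) (by omega)
    exact Or.inr (Or.inr (Or.inl ⟨h, h2.1, h2.2, h3.1, h3.2⟩))
  · obtain rfl := Fin.ext h
    exact Or.inl ⟨rfl, rfl, rfl⟩
  · rcases eq_or_lt_of_le (show (i : ℕ) + 1 ≤ k by omega) with h' | h'
    · obtain rfl : nextIdx i = k := Fin.ext (by omega)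
      exact Or.inr (Or.inl ⟨hnext, rfl, rfl⟩)
    · have h2 := C.endpoints_outside (j := i) (i := k) h
      have h3 := C.endpoints_outside (j := nextIdx i) (i := k) (by omega)
      exact Or.inr (Or.inr (Or.inr ⟨h', h2.1, h2.2, h3.1, h3.2⟩))

theorem sum_ite_val_eq_succ {i : Fin n} (hi : (i : ℕ) + 1 < n) :
    ∑ k : Fin n, (if (k : ℕ) = i + 1 then (1 : ℤ) else 0) = 1 := by
  rw [Finset.sum_eq_single (nextIdx i)]
  · rw [if_pos (val_nextIdx hi)]
  · intro k _ hk
    refine if_neg fun h => hk (Fin.ext ?_)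
    rw [h, val_nextIdx hi]
  · simp

theorem ChordLabeling.area_contribution (hσ : IsStandardization C.l σ)
    (hτ : IsStandardization C.r τ) {i : Fin n} (hi : (i : ℕ) + 1 < n)
    (hdes : C.l (nextIdx i) < C.l i) :
    (permWord σ i : ℤ) - permWord σ (nextIdx i) + permWord τ i - permWord τ (nextIdx i) - 1 -
        (symmDiff (remSet (permWord σ) i) (remSet (permWord τ) i)).card =
      endpointRank (extendWord C.l) (extendWord C.r) n (C.l i) -
        endpointRank (extendWord C.l) (extendWord C.r) n (C.r (nextIdx i)) := by
  have hcard : ((symmDiff (remSet (permWord σ) i) (remSet (permWord τ) i)).card : ℤ) =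
      ∑ k, if k ∈ symmDiff (remSet (permWord σ) i) (remSet (permWord τ) i) then 1 else 0 := by
    simp
  rw [← sum_ite_val_eq_succ hi, hcard]
  simp only [permWord]
  rw [hσ.val_eq_sum, hσ.val_eq_sum, hτ.val_eq_sum, hτ.val_eq_sum,
    endpointRank_extendWord _ _ le_rfl, endpointRank_extendWord _ _ le_rfl]
  simp only [← Finset.sum_sub_distrib, ← Finset.sum_add_distrib]
  refine Finset.sum_congr rfl fun k _ => ?_
  have hpos := C.descent_positions hi hdes k
  have hk := k.2
  have hmem := Finset.mem_symmDiff (a := k) (s := remSet (permWord σ) i)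
    (t := remSet (permWord τ) i)
  rw [hσ.mem_remSet, hτ.mem_remSet, Fin.lt_def] at hmem
  rw [if_congr hmem rfl rfl]
  omega

theorem ChordLabeling.tiles_contribution (hσ : IsStandardization C.l σ)
    (hτ : IsStandardization C.r τ) {i : Fin n} (hi : (i : ℕ) + 1 < n)
    (hdes : C.l (nextIdx i) < C.l i) :
    (permWord σ i : ℤ) - permWord σ (nextIdx i) + permWord τ i - permWord τ (nextIdx i) - 1 -
        ((remSet (permWord σ) i).card + (remSet (permWord τ) i).card) =
      seqOf C i + 1 - seqOf C (nextIdx i) := by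
  have hcard : ∀ s : Finset (Fin n), (s.card : ℤ) = ∑ k, if k ∈ s then 1 else 0 := by simp
  rw [sub_eq_iff_eq_add, sub_eq_iff_eq_add]
  have htwo : (seqOf C i : ℤ) + 1 - seqOf C (nextIdx i) +
      ((remSet (permWord σ) i).card + (remSet (permWord τ) i).card) + 1 =
      seqOf C i - seqOf C (nextIdx i) +
      ((remSet (permWord σ) i).card + (remSet (permWord τ) i).card) + (1 + 1) := by ring
  rw [htwo, ← sum_ite_val_eq_succ hi, hcard, hcard, seqOf_eq_endpointRank, seqOf_eq_endpointRank,
    endpointRank_extendWord _ _ i.2.le, endpointRank_extendWord _ _ (nextIdx i).2.le]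
  simp only [hσ.mem_remSet, hτ.mem_remSet, Fin.lt_def, val_nextIdx hi]
  simp only [permWord]
  rw [hσ.val_eq_sum, hσ.val_eq_sum, hτ.val_eq_sum, hτ.val_eq_sum]
  simp only [← Finset.sum_sub_distrib, ← Finset.sum_add_distrib]
  refine Finset.sum_congr rfl fun k _ => ?_
  have hpos := C.descent_positions hi hdes k
  omega

end DescentContribution

/-- For `T = DTR(λ, σ)`, with `σ`, `τ` the standardizations of the
left- and right-endpoint words:
`area(T) = desdif(σ,τ) − des(σ) − Σ_{i ∈ DES σ} |REM_i(σ) Δ REM_i(τ)|` and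
`tiles(T) = desdif(σ,τ) − des(σ) − Σ_{i ∈ DES σ} (|REM_i(σ)| + |REM_i(τ)|)`. -/
theorem area_tiles_DTR_rem_formulas (n : ℕ) (lam : DyckPath n) (C : ChordLabeling lam)
    (σ τ : Equiv.Perm (Fin n)) (hσ : IsStandardization C.l σ)
    (hτ : IsStandardization C.r τ)
    (T : DyckTiling n) (hT : IsDTR n (seqOf C) T) :
    (T.area : ℤ) =
      (∑ i ∈ descentFinset (permWord σ),
        ((permWord σ i : ℤ) - (permWord σ (nextIdx i) : ℤ) +
          (permWord τ i : ℤ) - (permWord τ (nextIdx i) : ℤ))) -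
        (permDes σ : ℤ) -
        ∑ i ∈ descentFinset (permWord σ),
          ((symmDiff (remSet (permWord σ) i) (remSet (permWord τ) i)).card : ℤ) ∧
    (T.numTiles : ℤ) =
      (∑ i ∈ descentFinset (permWord σ),
        ((permWord σ i : ℤ) - (permWord σ (nextIdx i) : ℤ) +
          (permWord τ i : ℤ) - (permWord τ (nextIdx i) : ℤ))) -
        (permDes σ : ℤ) -
        ∑ i ∈ descentFinset (permWord σ),
          (((remSet (permWord σ) i).card : ℤ) + ((remSet (permWord τ) i).card : ℤ)) := by
  have hw := C.chordWords
  have hp : ∀ i < n, (extendWord (seqOf C) i : ℤ) =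
      endpointRank (extendWord C.l) (extendWord C.r) i (extendWord C.l i) := fun i hi => by
    rw [extendWord_of_lt _ hi, extendWord_of_lt _ hi]
    exact seqOf_eq_endpointRank C ⟨i, hi⟩
  have hT' : IsDTR n (fun i => extendWord (seqOf C) i) T := by
    simpa only [extendWord_val] using hT
  have hdes : (permDes σ : ℤ) = ∑ i ∈ descentFinset (permWord σ), 1 := by simp [permDes]
  rw [hdes, ← Finset.sum_sub_distrib, ← Finset.sum_sub_distrib, ← Finset.sum_sub_distrib]
  constructor
  · rw [DyckTiling.area_eq_sum_endpointRank hw hp hT']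
    refine (hσ.sum_descentFinset _ _ fun i hi hdi => ?_).symm
    rw [C.area_contribution hσ hτ hi hdi, extendWord_val, ← val_nextIdx hi, extendWord_val]
  · rw [(DyckTiling.ribbon_invariants _ _ _ n T hw hp hT').2.2]
    refine (hσ.sum_descentFinset _ _ fun i hi hdi => ?_).symm
    rw [C.tiles_contribution hσ hτ hi hdi, extendWord_val, ← val_nextIdx hi, extendWord_val]

end
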